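/- arXiv:1511.08348 — 2 statements merged into one kernel-verified Lean document; each statement's English description precedes it below -/
import Mathlib

section
/- Let k be a field and Q a finite quiver. For all m ≥ 1 and p ≥ 0: (i) E_{m,p+1} maps the image of D_{m−1,p} into the image of D_{m,p+1}, so E_{m,p+1} induces a well-defined linear map k(Q_m//Q_{p+1})/Im(D_{m−1,p}) → k(Q_{m+1}//Q_{p+2})/Im(D_{m,p+1}); (ii) E_{m,p} maps the kernel of D_{m,p} into the kernel of D_{m+1,p+1}, so E_{m,p} restricts to a well-defined linear map Ker(D_{m,p}) → Ker(D_{m+1,p+1}). -/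
/-!
`D` and `E` are combinations of the extension maps `L` (at the target) and `R` (at the source):
`D = L ± R` and `E = -R`. Since `L R = R L` (`Lmap_comp_Rmap`) and the sign in `D` does not change
when both lengths grow by one, `D E = E D` (`Dmap_Emap_apply`). Hence `E` carries the image of `D`
into the image of the next `D`, and its kernel into the kernel of the next `D`.
-/

open Quiver

/-- Pairs of parallel paths: a path `γ` of length `m` and a path `β` of length `p`
with the same source and the same target.  This is the set `Q_m // Q_p`. -/
structure ParPair (V : Type) [Quiver V] (m p : ℕ) where
  src : V
  tgt : V
  γ : Quiver.Path src tgt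
  β : Quiver.Path src tgt
  hγ : γ.length = m
  hβ : β.length = p

/-- The "left extension" linear map sending a basis element `(γ, β)` to
`Σ_{a ∈ Q₁, s(a) = t(γ)} (aγ, aβ)`. -/
noncomputable def Lmap (k : Type) [Field k] (V : Type) [Quiver V] [Fintype V]
    [∀ a b : V, Fintype (a ⟶ b)] (m p : ℕ) :
    (ParPair V m p →₀ k) →ₗ[k] (ParPair V (m + 1) (p + 1) →₀ k) :=
  Finsupp.lift _ k _ fun x =>
    ∑ c : V, ∑ e : x.tgt ⟶ c,
      Finsupp.single ⟨x.src, c, x.γ.cons e, x.β.cons e, by simp [x.hγ], by simp [x.hβ]⟩ (1 : k)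

/-- The "right extension" linear map sending a basis element `(γ, β)` to
`Σ_{a ∈ Q₁, t(a) = s(γ)} (γa, βa)`. -/
noncomputable def Rmap (k : Type) [Field k] (V : Type) [Quiver V] [Fintype V]
    [∀ a b : V, Fintype (a ⟶ b)] (m p : ℕ) :
    (ParPair V m p →₀ k) →ₗ[k] (ParPair V (m + 1) (p + 1) →₀ k) :=
  Finsupp.lift _ k _ fun x =>
    ∑ c : V, ∑ e : c ⟶ x.src,
      Finsupp.single ⟨c, x.tgt, (e.toPath).comp x.γ, (e.toPath).comp x.β,
        by
          have h := x.hγ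
          simp only [Quiver.Path.length_comp, Quiver.Hom.toPath,
            Quiver.Path.length_cons, Quiver.Path.length_nil]
          omega,
        by
          have h := x.hβ
          simp only [Quiver.Path.length_comp, Quiver.Hom.toPath,
            Quiver.Path.length_cons, Quiver.Path.length_nil]
          omega⟩ (1 : k)

/-- The linear map `D_{m,p} : k(Q_m//Q_p) → k(Q_{m+1}//Q_{p+1})` given on basis elements
by `D_{m,p}(γ, β) = Σ_{a} (aγ, aβ) + (−1)^{p+m+1} Σ_{a} (γa, βa)`. -/
noncomputable def Dmap (k : Type) [Field k] (V : Type) [Quiver V] [Fintype V]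
    [∀ a b : V, Fintype (a ⟶ b)] (m p : ℕ) :
    (ParPair V m p →₀ k) →ₗ[k] (ParPair V (m + 1) (p + 1) →₀ k) :=
  Lmap k V m p + ((-1 : k) ^ (p + m + 1)) • Rmap k V m p


/-- The linear map `E_{m,p} : k(Q_m//Q_p) → k(Q_{m+1}//Q_{p+1})` given on basis elements
by `E_{m,p}(γ, β) = −Σ_{a ∈ Q₁, t(a)=s(γ)} (γa, βa)`. -/
noncomputable def Emap (k : Type) [Field k] (V : Type) [Quiver V] [Fintype V]
    [∀ a b : V, Fintype (a ⟶ b)] (m p : ℕ) :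
    (ParPair V m p →₀ k) →ₗ[k] (ParPair V (m + 1) (p + 1) →₀ k) :=
  - Rmap k V m p

/-- Extending at the target commutes with extending at the source, by associativity of
concatenation: both composites send `(γ, β)` to `Σ (aγb, aβb)` over composable arrows `a`, `b`. -/
theorem Lmap_comp_Rmap (k : Type) [Field k] (V : Type) [Quiver V] [Fintype V]
    [∀ a b : V, Fintype (a ⟶ b)] (m p : ℕ) :
    Lmap k V (m + 1) (p + 1) ∘ₗ Rmap k V m p = Rmap k V (m + 1) (p + 1) ∘ₗ Lmap k V m p := by
  refine Finsupp.lhom_ext' fun x => LinearMap.ext_ring ?_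
  simp only [LinearMap.comp_apply, Finsupp.lsingle_apply, Lmap, Rmap, Finsupp.lift_apply,
    Finsupp.sum_single_index, zero_smul, one_smul, map_sum]
  -- Both sides are sums over `c`, `e : c ⟶ x.src`, `d`, `f : x.tgt ⟶ d`, in different orders.
  trans ∑ c : V, ∑ d : V, ∑ e : c ⟶ x.src, ∑ f : x.tgt ⟶ d,
    Finsupp.single (⟨c, d, (e.toPath.comp x.γ).cons f, (e.toPath.comp x.β).cons f,
      by simp [x.hγ, add_comm], by simp [x.hβ, add_comm]⟩ :
        ParPair V (m + 1 + 1) (p + 1 + 1)) (1 : k)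
  · exact Finset.sum_congr rfl fun c _ => Finset.sum_comm
  · rw [Finset.sum_comm]
    refine Finset.sum_congr rfl fun d _ => ?_
    rw [Finset.sum_comm]
    exact Finset.sum_congr rfl fun c _ => Finset.sum_comm

/-- The sign `(-1)^(p+m+1)` is unchanged when `m` and `p` both increase by one, so `D` and `E`
are the same combinations of `L` and `R` in both bidegrees and therefore commute. -/
theorem Dmap_Emap_apply (k : Type) [Field k] (V : Type) [Quiver V] [Fintype V]
    [∀ a b : V, Fintype (a ⟶ b)] (m p : ℕ) (x : ParPair V m p →₀ k) :
    Dmap k V (m + 1) (p + 1) (Emap k V m p x) = Emap k V (m + 1) (p + 1) (Dmap k V m p x) := by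
  have h := LinearMap.congr_fun (Lmap_comp_Rmap k V m p) x
  have hs : (-1 : k) ^ (p + 1 + (m + 1) + 1) = (-1) ^ (p + m + 1) := by ring
  simp only [LinearMap.comp_apply] at h
  simp only [Dmap, Emap, LinearMap.add_apply, LinearMap.smul_apply, LinearMap.neg_apply, map_add,
    map_neg, map_smul, hs, h, smul_neg, neg_add]

/-- for a field `k`, a finite quiver `Q`, and all `m ≥ 1` (here `m = m' + 1`)
and `p ≥ 0`:
(i) `E_{m,p+1}` maps the image of `D_{m−1,p}` into the image of `D_{m,p+1}`;
(ii) `E_{m,p}` maps the kernel of `D_{m,p}` into the kernel of `D_{m+1,p+1}`. -/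
theorem Emap_image_and_kernel (k : Type) [Field k] (V : Type) [Quiver V] [Fintype V]
    [∀ a b : V, Fintype (a ⟶ b)] (m' p : ℕ) :
    Submodule.map (Emap k V (m' + 1) (p + 1)) (LinearMap.range (Dmap k V m' p))
        ≤ LinearMap.range (Dmap k V (m' + 1) (p + 1))
      ∧ Submodule.map (Emap k V (m' + 1) p) (LinearMap.ker (Dmap k V (m' + 1) p))
        ≤ LinearMap.ker (Dmap k V (m' + 2) (p + 1)) := by
  constructor
  · rintro _ ⟨_, ⟨x, rfl⟩, rfl⟩
    exact ⟨Emap k V m' p x, Dmap_Emap_apply k V m' p x⟩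
  · rintro _ ⟨x, hx, rfl⟩
    have hx' : Dmap k V (m' + 1) p x = 0 := hx
    exact (Dmap_Emap_apply k V (m' + 1) p x).trans (by rw [hx', map_zero])
end

section
/- Let k be a field and V a k-vector space. The horizontal composition μ and the vertical composition ν of the multiple-loops PROP satisfy the interchange law: for all f₁ ∈ P(m₁, p₁), f₂ ∈ P(m₂, p₂), g₁ ∈ P(p₁, n₁), g₂ ∈ P(p₂, n₂), one has ν(μ(f₁ ⊗ f₂) ⊗ μ(g₁ ⊗ g₂)) = μ(ν(f₁ ⊗ g₁) ⊗ ν(f₂ ⊗ g₂)); that is, (g₁ ∘ f₁) ⊙ (g₂ ∘ f₂) = (g₁ ⊙ g₂) ∘ (f₁ ⊙ f₂) in P. -/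
/-!
Both sides of the interchange law are, component by component, maps of the form
`c ∘ (a ⊗ b) ∘ (tpe m₁ m₂)⁻¹` (or a sum of two such), where `c` collapses the output. On the
right-hand side the middle factor `tpe p₁ p₂` produced by the inner product cancels against
the inverse produced by the outer one, and the claim becomes functoriality of `⊗`:
`(g₁ ⊗ g₂) ∘ (f₁ ⊗ f₂) = (g₁ ∘ f₁) ⊗ (g₂ ∘ f₂)`. The product
of two first components is dropped by `μ` on both sides alike. The collapse `c` is
arbitrary in this argument, so `comp_tmul2` covers all the terms at once.
-/

open scoped TensorProduct

/-- The `n`-th tensor power `V^{⊗n}` of the `k`-vector space `V`. -/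
abbrev TP (k V : Type) [Field k] [AddCommGroup V] [Module k V] (n : ℕ) : Type :=
  ⨂[k] _ : Fin n, V

variable (k V : Type) [Field k] [AddCommGroup V] [Module k V]

/-- `V^{⊗(p−1)}`, with the convention `V^{⊗(−1)} := 0`. -/
def Shift (k V : Type) [Field k] [AddCommGroup V] [Module k V] : ℕ → Type
  | 0 => PUnit
  | q + 1 => TP k V q

noncomputable instance Shift.addCommGroup : ∀ p : ℕ, AddCommGroup (Shift k V p)
  | 0 => inferInstanceAs (AddCommGroup PUnit)
  | q + 1 => inferInstanceAs (AddCommGroup (TP k V q))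

noncomputable instance Shift.module : ∀ p : ℕ, Module k (Shift k V p)
  | 0 => inferInstanceAs (Module k PUnit)
  | q + 1 => inferInstanceAs (Module k (TP k V q))

/-- The spaces `P(m, p) := Hom_k(V^{⊗m}, V^{⊗(p−1)}) ⊕ Hom_k(V^{⊗m}, V^{⊗p})` of the
multiple-loops PROP; the two summands are the first and second components. -/
def LoopP (m p : ℕ) : Type :=
  (TP k V m →ₗ[k] Shift k V p) × (TP k V m →ₗ[k] TP k V p)

/-- The canonical isomorphism `V^{⊗a} ⊗ V^{⊗b} ≅ V^{⊗(a+b)}`. -/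
noncomputable def tpe (a b : ℕ) : (TP k V a ⊗[k] TP k V b) ≃ₗ[k] TP k V (a + b) :=
  (PiTensorProduct.tmulEquiv (R := k) (M := V) (ι := Fin a) (ι₂ := Fin b)).trans
    (PiTensorProduct.reindex k (fun _ : Fin a ⊕ Fin b => V) finSumFinEquiv)

/-- The tensor product of linear maps between tensor powers, as a map between tensor
powers (via the canonical isomorphisms). -/
noncomputable def tmul2 {m p n q : ℕ} (f : TP k V m →ₗ[k] TP k V p)
    (g : TP k V n →ₗ[k] TP k V q) : TP k V (m + n) →ₗ[k] TP k V (p + q) :=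
  (tpe k V p q).toLinearMap ∘ₗ TensorProduct.map f g ∘ₗ (tpe k V m n).symm.toLinearMap

/-- Transport `V^{⊗a} → Shift b` along `a + 1 = b`. -/
def shiftCast {a b : ℕ} (h : a + 1 = b) : TP k V a →ₗ[k] Shift k V b := by
  subst h; exact LinearMap.id

/-- Collapse `Shift p ⊗ V^{⊗q} → Shift (p+q)` (zero when `p = 0`). -/
noncomputable def mulSL : ∀ (p q : ℕ), (Shift k V p ⊗[k] TP k V q) →ₗ[k] Shift k V (p + q)
  | 0, _ => 0
  | p' + 1, q =>
      (shiftCast k V (show p' + q + 1 = p' + 1 + q by omega))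
        ∘ₗ (tpe k V p' q).toLinearMap

/-- Collapse `V^{⊗p} ⊗ Shift q → Shift (p+q)` (zero when `q = 0`). -/
noncomputable def mulLS : ∀ (p q : ℕ), (TP k V p ⊗[k] Shift k V q) →ₗ[k] Shift k V (p + q)
  | _, 0 => 0
  | p, q' + 1 =>
      (shiftCast k V (show p + q' + 1 = p + (q' + 1) by omega))
        ∘ₗ (tpe k V p q').toLinearMap

/-- The horizontal composition `μ : P(m,p) ⊗ P(n,q) → P(m+n, p+q)` of the multiple-loops
PROP: on component elements it is the tensor product of linear maps, placed in the
component determined by the total output length, except that the product of two first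
components is `0`. -/
noncomputable def muLoop {m p n q : ℕ} (f : LoopP k V m p) (g : LoopP k V n q) :
    LoopP k V (m + n) (p + q) :=
  ⟨(mulSL k V p q ∘ₗ TensorProduct.map f.1 g.2 ∘ₗ (tpe k V m n).symm.toLinearMap)
      + (mulLS k V p q ∘ₗ TensorProduct.map f.2 g.1 ∘ₗ (tpe k V m n).symm.toLinearMap),
    tmul2 k V f.2 g.2⟩

/-- The vertical composition `ν : P(m,p) ⊗ P(p,n) → P(m,n)` of the multiple-loops PROP:
`ν(f ⊗ g)` is zero on the first component of `f`, and composes `g` after `f` otherwise. -/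
noncomputable def nuLoop {m p n : ℕ} (f : LoopP k V m p) (g : LoopP k V p n) :
    LoopP k V m n :=
  ⟨g.1 ∘ₗ f.2, g.2 ∘ₗ f.2⟩

/-- Functoriality of `⊗` across the identification `V^{⊗p₁} ⊗ V^{⊗p₂} ≅ V^{⊗(p₁+p₂)}`, for
arbitrary targets `A`, `B` and an arbitrary map `c` out of `A ⊗ B`. -/
theorem comp_tmul2 {A B C : Type} [AddCommGroup A] [Module k A] [AddCommGroup B] [Module k B]
    [AddCommGroup C] [Module k C] {m₁ p₁ m₂ p₂ : ℕ} (c : A ⊗[k] B →ₗ[k] C)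
    (a : TP k V p₁ →ₗ[k] A) (b : TP k V p₂ →ₗ[k] B)
    (f : TP k V m₁ →ₗ[k] TP k V p₁) (g : TP k V m₂ →ₗ[k] TP k V p₂) :
    (c ∘ₗ TensorProduct.map a b ∘ₗ (tpe k V p₁ p₂).symm.toLinearMap) ∘ₗ tmul2 k V f g
      = c ∘ₗ TensorProduct.map (a ∘ₗ f) (b ∘ₗ g) ∘ₗ (tpe k V m₁ m₂).symm.toLinearMap := by
  ext x
  simp [tmul2, TensorProduct.map_comp]

/-- the horizontal composition `μ` and vertical composition `ν` of the
multiple-loops PROP satisfy the interchange law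
`(g₁ ∘ f₁) ⊙ (g₂ ∘ f₂) = (g₁ ⊙ g₂) ∘ (f₁ ⊙ f₂)`. -/
theorem loopPROP_interchange (k V : Type) [Field k] [AddCommGroup V] [Module k V]
    (m₁ p₁ n₁ m₂ p₂ n₂ : ℕ)
    (f₁ : LoopP k V m₁ p₁) (f₂ : LoopP k V m₂ p₂)
    (g₁ : LoopP k V p₁ n₁) (g₂ : LoopP k V p₂ n₂) :
    muLoop k V (nuLoop k V f₁ g₁) (nuLoop k V f₂ g₂)
      = nuLoop k V (muLoop k V f₁ f₂) (muLoop k V g₁ g₂) := by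
  refine Prod.ext ?_ ?_
  · simp only [muLoop, nuLoop, LinearMap.add_comp, comp_tmul2]
  · exact (comp_tmul2 k V (tpe k V n₁ n₂).toLinearMap g₁.2 g₂.2 f₁.2 f₂.2).symm
end
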